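/- arXiv:1902.00747 — 2 statements merged into one kernel-verified Lean document; each statement's English description precedes it below -/
import Mathlib

section
/- Let G be the complete multipartite graph K_{n_1,…,n_k} of order n = n_1 + ⋯ + n_k (n_i ≥ 1). Then S_G(λ) = (λ+1)^{n−k} ( λ^k + (k−n) λ^{k−1} + (C(k,2) − (k−1)n) λ^{k−2} + ∑_{m=3}^{k} ∑_{i=0}^{m} (−1)^{i−1} 2^{i−1} C(k−i, m−i) (i−2) σ_i λ^{k−m} ), where σ_0 = 1, σ_1 = n, and σ_i = ∑_{1 ≤ j_1 < ⋯ < j_i ≤ k} n_{j_1} ⋯ n_{j_i} for i = 2,…,k, and C(a,b) denotes the binomial coefficient. -/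
/-!
Write `n_j` for the part sizes and `P` for the vertex-part incidence matrix. Then
`S + I = P (2I - J) Pᵀ`, and since `Pᵀ P = diag(n_j)` this has the same nonzero spectrum as the
`k × k` matrix `diag(n_j) (2I - J)`, a rank-one perturbation of `diag(2 n_j)`. With `y = λ + 1`, the
determinant lemma turns its characteristic polynomial into
`∏ (y - 2 n_j) + ∑ n_j ∏_{i ≠ j} (y - 2 n_i)`. By Vieta's formulas and Euler's identity for
homogeneous polynomials the coefficient of `y^{k-i}` is `(1 - i/2) (-2)^i σ_i`, and expanding the
powers of `λ + 1` gives the coefficients in `λ`.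
-/

open Polynomial Matrix Finset SimpleGraph

/- The Seidel matrix `S(G) = J - I - 2A(G)` of a simple graph `G`. -/
open scoped Classical in
noncomputable def seidelMatrix {V : Type*} [Fintype V] [DecidableEq V]
    (G : SimpleGraph V) : Matrix V V ℝ :=
  (Matrix.of fun _ _ => (1 : ℝ)) - 1 - 2 • G.adjMatrix ℝ

/-- The `m`-th elementary symmetric polynomial `σ_m` in the part sizes
`n 0, …, n (k-1)`, as a real number (`σ_0 = 1`, `σ_1 = n`). -/
noncomputable def esym {k : ℕ} (n : Fin k → ℕ) (m : ℕ) : ℝ :=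
  ∑ t ∈ Finset.powersetCard m (Finset.univ : Finset (Fin k)), ∏ j ∈ t, (n j : ℝ)

section Determinants

variable {m n R : Type*} [Fintype m] [DecidableEq m] [Fintype n] [DecidableEq n] [CommRing R]

theorem det_add_vecMulVec_piecewise (A : Matrix n n R) (u v : n → R) (s : Finset n) :
    (A + vecMulVec (s.piecewise u 0) v).det = A.det + ∑ i ∈ s, u i * (A.updateRow i v).det := by
  induction s using Finset.induction_on with
  | empty => simp
  | insert a s ha ih =>
    set M := A + vecMulVec (s.piecewise u 0) v with hM
    have hrow : A + vecMulVec ((insert a s).piecewise u 0) v = M.updateRow a (M a + u a • v) := by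
      ext i j
      rcases eq_or_ne i a with rfl | hi
      · simp [hM, ha, vecMulVec_apply]
      · simp [hM, hi, vecMulVec_apply, Finset.piecewise]
    have hdet : (M.updateRow a v).det = (A.updateRow a v).det := by
      refine det_eq_of_forall_row_eq_smul_add_const (s.piecewise u 0) a (by simp [ha]) fun i j => ?_
      rcases eq_or_ne i a with rfl | hi
      · simp [ha]
      · simp [hM, hi, vecMulVec_apply]
    rw [hrow, det_updateRow_add, det_updateRow_smul, updateRow_eq_self, hdet, ih, sum_insert ha]
    ring

theorem det_add_vecMulVec (A : Matrix n n R) (u v : n → R) :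
    (A + vecMulVec u v).det = A.det + v ⬝ᵥ A.adjugate *ᵥ u := by
  have h := det_add_vecMulVec_piecewise A u v univ
  simp only [piecewise_univ, ← cramer_transpose_apply] at h
  rw [h, cramer_eq_adjugate_mulVec, ← adjugate_transpose, mulVec_transpose, dotProduct_mulVec,
    dotProduct_comm]
  rfl

theorem det_diagonal_add_vecMulVec (d u v : n → R) :
    (diagonal d + vecMulVec u v).det = ∏ i, d i + ∑ j, u j * v j * ∏ i ∈ univ.erase j, d i := by
  rw [det_add_vecMulVec, det_diagonal, adjugate_diagonal]
  congr 1
  refine sum_congr rfl fun j _ => ?_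
  rw [mulVec_diagonal]
  ring

theorem charpoly_diagonal_sub_vecMulVec (d u v : n → R) :
    (diagonal d - vecMulVec u v).charpoly =
      ∏ i, (X - C (d i)) + ∑ j, C (u j * v j) * ∏ i ∈ univ.erase j, (X - C (d i)) := by
  have hcharmatrix : charmatrix (diagonal d - vecMulVec u v) =
      diagonal (fun i => X - C (d i)) + vecMulVec (fun i => C (u i)) fun i => C (v i) := by
    ext1 i j
    rcases eq_or_ne i j with rfl | hij
    · simp [vecMulVec_apply, sub_add]
    · simp [hij, vecMulVec_apply]
  simp only [Matrix.charpoly, hcharmatrix, det_diagonal_add_vecMulVec, C_mul]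

theorem charpoly_submatrix_self_of_card_le (B : Matrix m m R) (f : n → m)
    (h : Fintype.card m ≤ Fintype.card n) :
    (B.submatrix f f).charpoly = X ^ (Fintype.card n - Fintype.card m) *
      (diagonal (fun i => (#{v | f v = i} : R)) * B).charpoly := by
  have hleft : B.submatrix f id * (1 : Matrix m m R).submatrix id f = B.submatrix f f := by
    rw [← submatrix_mul _ _ _ _ _ Function.bijective_id, mul_one]
  have hright : (1 : Matrix m m R).submatrix id f * B.submatrix f id =
      diagonal (fun i => (#{v | f v = i} : R)) * B := by
    ext i j
    rw [diagonal_mul, card_filter, Nat.cast_sum, sum_mul, Matrix.mul_apply]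
    refine sum_congr rfl fun v _ => ?_
    rcases eq_or_ne (f v) i with rfl | hv
    · simp [Matrix.one_apply]
    · simp [hv, hv.symm]
  rw [← hleft, charpoly_mul_comm_of_le _ _ h, hright]

end Determinants

section SeidelMatrix

variable {ι : Type*} [Fintype ι] [DecidableEq ι] (V : ι → Type*) [∀ i, Fintype (V i)]
  [∀ i, DecidableEq (V i)]

theorem seidelMatrix_completeMultipartiteGraph :
    seidelMatrix (completeMultipartiteGraph V) =
      (diagonal 2 - vecMulVec 1 1 : Matrix ι ι ℝ).submatrix Sigma.fst Sigma.fst - 1 := by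
  ext v w
  rw [seidelMatrix, two_smul]
  by_cases h : v.1 = w.1
  · norm_num [h]
  · have hvw : v ≠ w := fun e => h (congrArg Sigma.fst e)
    simp [h, hvw]

theorem charpoly_seidelMatrix_completeMultipartiteGraph
    (h : Fintype.card ι ≤ ∑ i, Fintype.card (V i)) :
    (seidelMatrix (completeMultipartiteGraph V)).charpoly =
      (X + 1) ^ (∑ i, Fintype.card (V i) - Fintype.card ι) *
        (∏ i, (X - C (2 * (Fintype.card (V i) : ℝ))) +
          ∑ j, C (Fintype.card (V j) : ℝ) *
            ∏ i ∈ univ.erase j, (X - C (2 * (Fintype.card (V i) : ℝ)))).comp (X + 1) := by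
  have hfiber (i : ι) : #{v : Σ i, V i | v.1 = i} = Fintype.card (V i) := by
    rw [← Fintype.card_subtype]
    exact Fintype.card_congr (Equiv.sigmaSubtype i)
  have hquot : diagonal (fun i => (Fintype.card (V i) : ℝ)) * (diagonal 2 - vecMulVec 1 1) =
      diagonal (fun i => 2 * (Fintype.card (V i) : ℝ)) -
        vecMulVec (fun i => (Fintype.card (V i) : ℝ)) 1 := by
    ext i j
    rcases eq_or_ne i j with rfl | hij
    · simp only [diagonal_mul, Matrix.sub_apply, diagonal_apply_eq, vecMulVec_apply,
        Pi.ofNat_apply]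
      ring
    · simp [hij]
  rw [seidelMatrix_completeMultipartiteGraph, ← map_one (scalar _), charpoly_sub_scalar,
    charpoly_submatrix_self_of_card_le _ _ (by rwa [Fintype.card_sigma])]
  simp only [hfiber, hquot, charpoly_diagonal_sub_vecMulVec, Fintype.card_sigma]
  simp

end SeidelMatrix

section ElementarySymmetric

variable {ι R : Type*} [CommRing R] (s : Finset ι) (f : ι → R)

theorem prod_X_add_C_eq_sum_esymm_map :
    ∏ i ∈ s, (X + C (f i)) =
      ∑ i ∈ range (#s + 1), C ((s.val.map f).esymm i) * X ^ (#s - i) := by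
  have vieta := Multiset.prod_X_add_C_eq_sum_esymm (s.val.map f)
  rwa [Multiset.map_map, Multiset.card_map] at vieta

/-- Euler's identity: `∏ (x + f i)` is homogeneous of degree `#s` in `x` and the `f i`. -/
theorem sum_mul_prod_erase_X_add_C [DecidableEq ι] :
    ∑ j ∈ s, C (f j) * ∏ i ∈ s.erase j, (X + C (f i)) =
      ∑ i ∈ range (#s + 1), C (i * (s.val.map f).esymm i) * X ^ (#s - i) := by
  calc
    _ = ∑ j ∈ s, (∏ i ∈ s, (X + C (f i)) - X * ∏ i ∈ s.erase j, (X + C (f i))) := by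
      refine sum_congr rfl fun j hj => ?_
      rw [← mul_prod_erase s _ hj]
      ring
    _ = (#s : R[X]) * ∏ i ∈ s, (X + C (f i)) - X * derivative (∏ i ∈ s, (X + C (f i))) := by
      simp [derivative_prod_finset, mul_sum]
    _ = _ := by
      rw [prod_X_add_C_eq_sum_esymm_map, derivative_sum, mul_sum, mul_sum, ← sum_sub_distrib]
      refine sum_congr rfl fun i hi => ?_
      obtain ⟨l, hl⟩ := Nat.exists_eq_add_of_le (mem_range_succ_iff.mp hi)
      rw [hl, Nat.add_sub_cancel_left]
      cases l with
      | zero => simp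
      | succ l =>
        rw [derivative_C_mul, derivative_X_pow_succ]
        simp only [Nat.cast_add, Nat.cast_one, map_add, map_mul, map_natCast, map_one]
        ring

end ElementarySymmetric

theorem sum_mul_add_one_pow {R : Type*} [CommSemiring R] (k : ℕ) (a : ℕ → R) (x : R) :
    ∑ i ∈ range (k + 1), a i * (x + 1) ^ (k - i) =
      ∑ m ∈ range (k + 1), (∑ i ∈ range (m + 1), (k - i).choose (m - i) * a i) * x ^ (k - m) := by
  have binomial {i : ℕ} (hi : i ∈ range (k + 1)) : (x + 1) ^ (k - i) =
      ∑ m ∈ Ico i (k + 1), x ^ (k - m) * (k - i).choose (m - i) := by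
    rw [sum_Ico_eq_sum_range, add_comm x, add_pow, Nat.sub_add_comm (mem_range_succ_iff.mp hi)]
    simp [Nat.sub_sub]
  calc
    _ = ∑ i ∈ range (k + 1), ∑ m ∈ Ico i (k + 1),
          a i * (x ^ (k - m) * (k - i).choose (m - i)) :=
      sum_congr rfl fun i hi => by rw [binomial hi, mul_sum]
    _ = ∑ m ∈ range (k + 1), ∑ i ∈ range (m + 1),
          a i * (x ^ (k - m) * (k - i).choose (m - i)) := by
      simp only [range_eq_Ico]
      exact sum_Ico_Ico_comm 0 (k + 1) _
    _ = _ := by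
      refine sum_congr rfl fun m _ => ?_
      rw [sum_mul]
      exact sum_congr rfl fun i _ => by ring

theorem sum_range_succ_eq_add_sum_Icc_three {M : Type*} [AddCommMonoid M] {k : ℕ} {f : ℕ → M}
    (hf : ∀ m, k < m → f m = 0) :
    ∑ m ∈ range (k + 1), f m = f 0 + f 1 + f 2 + ∑ m ∈ Icc 3 k, f m := by
  have hdisj : Disjoint (range 3) (Icc 3 k) :=
    Finset.disjoint_left.mpr fun m => by simp only [mem_range, mem_Icc]; omega
  have hsub : range (k + 1) ⊆ range 3 ∪ Icc 3 k := fun m => by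
    simp only [mem_union, mem_range, mem_Icc]; omega
  rw [sum_subset hsub fun m _ hm => hf m (by rw [mem_range] at hm; omega),
    sum_union hdisj]
  simp [sum_range_succ]

section Coefficients

variable {k : ℕ} (n : Fin k → ℕ)

theorem esym_zero : esym n 0 = 1 := by simp [esym]

theorem esym_one : esym n 1 = ∑ i, (n i : ℝ) := by simp [esym, powersetCard_one]

theorem esym_eq_zero_of_lt {i : ℕ} (hi : k < i) : esym n i = 0 := by
  rw [esym, powersetCard_eq_empty.mpr (by simpa using hi), sum_empty]

theorem esymm_map_mul_eq_pow_mul_esym (c : ℝ) (i : ℕ) :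
    (univ.val.map fun j => c * n j).esymm i = c ^ i * esym n i := by
  rw [Finset.esymm_map_val, esym, mul_sum]
  refine sum_congr rfl fun t ht => ?_
  rw [prod_mul_distrib, prod_const, (mem_powersetCard.mp ht).2]

/-- The coefficient of `(λ + 1)^{k - i}` in the quotient of the Seidel characteristic polynomial of
`K_{n_1,…,n_k}` by `(λ + 1)^{n - k}`. It equals `(-1)^{i-1} 2^{i-1} (i - 2) σ_i`, written here
without negative exponents. -/
noncomputable def shiftedSeidelCoeff (i : ℕ) : ℝ :=
  (1 - i / 2) * (-2) ^ i * esym n i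

theorem shiftedSeidelCoeff_zero : shiftedSeidelCoeff n 0 = 1 := by
  simp [shiftedSeidelCoeff, esym_zero]

theorem shiftedSeidelCoeff_one : shiftedSeidelCoeff n 1 = -∑ i, (n i : ℝ) := by
  rw [shiftedSeidelCoeff, esym_one]
  ring

theorem shiftedSeidelCoeff_two : shiftedSeidelCoeff n 2 = 0 := by
  simp [shiftedSeidelCoeff]

/-- The coefficient of `λ^{k - m}` in the quotient of the Seidel characteristic polynomial of
`K_{n_1,…,n_k}` by `(λ + 1)^{n - k}`, extended by zero to `m > k`. -/
noncomputable def seidelCoeff (m : ℕ) : ℝ :=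
  ∑ i ∈ range (m + 1), (k - i).choose (m - i) * shiftedSeidelCoeff n i

theorem prod_add_sum_prod_erase_eq_sum_shiftedSeidelCoeff :
    ∏ i, (X - C (2 * (n i : ℝ))) +
        ∑ j, C (n j : ℝ) * ∏ i ∈ univ.erase j, (X - C (2 * (n i : ℝ))) =
      ∑ i ∈ range (k + 1), C (shiftedSeidelCoeff n i) * X ^ (k - i) := by
  have hX (i : Fin k) : X - C (2 * (n i : ℝ)) = X + C (-2 * (n i : ℝ)) := by simp [sub_eq_add_neg]
  have hC (j : Fin k) : C (n j : ℝ) = C (-1 / 2 : ℝ) * C (-2 * (n j : ℝ)) := by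
    rw [← C_mul]
    ring_nf
  simp only [hX, hC, mul_assoc (C (-1 / 2 : ℝ))]
  rw [← mul_sum, sum_mul_prod_erase_X_add_C, prod_X_add_C_eq_sum_esymm_map, mul_sum,
    ← sum_add_distrib, card_univ, Fintype.card_fin]
  refine sum_congr rfl fun i _ => ?_
  rw [esymm_map_mul_eq_pow_mul_esym, ← mul_assoc, ← add_mul, ← C_mul, ← C_add, shiftedSeidelCoeff]
  ring_nf

theorem sum_shiftedSeidelCoeff_comp_X_add_one :
    (∑ i ∈ range (k + 1), C (shiftedSeidelCoeff n i) * X ^ (k - i)).comp (X + 1) =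
      ∑ m ∈ range (k + 1), C (seidelCoeff n m) * X ^ (k - m) := by
  simp only [Polynomial.sum_comp, mul_comp, C_comp, pow_comp, X_comp]
  rw [sum_mul_add_one_pow]
  simp [seidelCoeff]

theorem seidelCoeff_zero : seidelCoeff n 0 = 1 := by
  simp [seidelCoeff, shiftedSeidelCoeff_zero]

theorem seidelCoeff_one : seidelCoeff n 1 = k - ∑ i, (n i : ℝ) := by
  simp [seidelCoeff, sum_range_succ, shiftedSeidelCoeff_zero, shiftedSeidelCoeff_one,
    sub_eq_add_neg]

theorem seidelCoeff_two :
    seidelCoeff n 2 = k.choose 2 - ((k : ℝ) - 1) * ∑ i, (n i : ℝ) := by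
  cases k <;>
    simp [seidelCoeff, sum_range_succ, shiftedSeidelCoeff_zero, shiftedSeidelCoeff_one,
      shiftedSeidelCoeff_two, sub_eq_add_neg]

theorem seidelCoeff_eq_zero_of_lt {m : ℕ} (hm : k < m) : seidelCoeff n m = 0 := by
  refine sum_eq_zero fun i _ => ?_
  rcases le_or_gt i k with hi | hi
  · rw [Nat.choose_eq_zero_of_lt (by omega), Nat.cast_zero, zero_mul]
  · rw [shiftedSeidelCoeff, esym_eq_zero_of_lt n hi, mul_zero, mul_zero]

theorem seidelCoeff_eq_sum_zpow (m : ℕ) :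
    seidelCoeff n m = ∑ i ∈ range (m + 1),
      (-1 : ℝ) ^ ((i : ℤ) - 1) * (2 : ℝ) ^ ((i : ℤ) - 1) *
        ((k - i).choose (m - i) : ℝ) * ((i : ℝ) - 2) * esym n i := by
  refine sum_congr rfl fun i _ => ?_
  have hpow : (-1 : ℝ) ^ ((i : ℤ) - 1) * (2 : ℝ) ^ ((i : ℤ) - 1) = (-2) ^ i / -2 := by
    rw [← mul_zpow, zpow_sub_one₀ (by norm_num), zpow_natCast]
    norm_num [div_eq_mul_inv]
  rw [hpow, shiftedSeidelCoeff]
  ring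

end Coefficients

/-- **Theorem (coefficients of the Seidel characteristic polynomial).**
For `G = K_{n_1,…,n_k}` of order `n = ∑ i, n i`,
`S_G(λ) = (λ+1)^{n-k} (λ^k + (k-n)λ^{k-1} + (C(k,2)-(k-1)n)λ^{k-2}
  + ∑_{m=3}^{k} ∑_{i=0}^{m} (-1)^{i-1} 2^{i-1} C(k-i,m-i) (i-2) σ_i λ^{k-m})`,
where the signs and powers of two are integer powers `(-1)^{i-1}`, `2^{i-1}` in `ℝ`. -/
theorem seidel_charpoly_coeffs (k : ℕ) (n : Fin k → ℕ) (hn : ∀ i, 1 ≤ n i) :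
    (seidelMatrix (completeMultipartiteGraph fun i => Fin (n i))).charpoly =
      (X + 1) ^ ((∑ i, n i) - k) *
        (X ^ k + C ((k : ℝ) - ∑ i, (n i : ℝ)) * X ^ (k - 1) +
          C ((k.choose 2 : ℝ) - ((k : ℝ) - 1) * ∑ i, (n i : ℝ)) * X ^ (k - 2) +
          ∑ m ∈ Finset.Icc 3 k,
            C (∑ i ∈ Finset.range (m + 1),
                (-1 : ℝ) ^ ((i : ℤ) - 1) * (2 : ℝ) ^ ((i : ℤ) - 1) *
                  ((k - i).choose (m - i) : ℝ) * ((i : ℝ) - 2) * esym n i) *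
              X ^ (k - m)) := by
  have hcard : Fintype.card (Fin k) ≤ ∑ i, Fintype.card (Fin (n i)) := by
    simpa using sum_le_sum fun i (_ : i ∈ univ) => hn i
  rw [charpoly_seidelMatrix_completeMultipartiteGraph _ hcard]
  simp only [Fintype.card_fin, prod_add_sum_prod_erase_eq_sum_shiftedSeidelCoeff,
    sum_shiftedSeidelCoeff_comp_X_add_one]
  rw [sum_range_succ_eq_add_sum_Icc_three fun m hm => by
    rw [seidelCoeff_eq_zero_of_lt n hm, C_0, zero_mul],
    seidelCoeff_zero, seidelCoeff_one, seidelCoeff_two, C_1, one_mul, Nat.sub_zero]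
  simp only [seidelCoeff_eq_sum_zpow]
end

section
/- If a graph G has the same Seidel spectrum as the complete k-partite graph K_{n_1,…,n_k} (all n_i ≥ 1), then G is switching equivalent to a complete k-partite graph. -/
open Polynomial Matrix Finset SimpleGraph

/-- Two graphs on the same vertex set are switching equivalent iff their Seidel
matrices are conjugate by a diagonal `±1` matrix. -/
def SwitchingEquiv {V : Type*} [Fintype V] [DecidableEq V]
    (G H : SimpleGraph V) : Prop :=
  ∃ ε : V → ℝ, (∀ v, ε v = 1 ∨ ε v = -1) ∧
    seidelMatrix H = Matrix.diagonal ε * seidelMatrix G * Matrix.diagonal ε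

/-- A graph `G` is determined, up to switching, by its Seidel spectrum
(`S`-determined) if every graph with the same Seidel spectrum is switching
equivalent to a graph isomorphic to `G`. -/
def SDetermined {V : Type} [Fintype V] [DecidableEq V] (G : SimpleGraph V) : Prop :=
  ∀ (W : Type) [Fintype W] [DecidableEq W] (H : SimpleGraph W),
    (seidelMatrix H).charpoly = (seidelMatrix G).charpoly →
    ∃ H' : SimpleGraph W, SwitchingEquiv H H' ∧ Nonempty (H' ≃g G)

/-!
A switching class is determined by its two-graph, that is, by the signs of the products
`M u v * M v w * M w u` of entries of `M = S(G) + I`. A graph is complete multipartite up to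
switching when the relation that every triple through `u` and `v` has sign `1` is an equivalence for
which only the triples meeting three classes have sign `-1`.

The matrix `M` of a complete multipartite graph becomes positive semidefinite on adding `J`, so any
cospectral `M` has at most one negative eigenvalue. The vectors `e_u - M u v • e_v` are isotropic
for `M`, and for a triple `u, v, w` of sign `1` those of `(u, v)` and `(u, w)` are moreover
orthogonal. A form with at most one negative direction has no totally isotropic plane avoiding its
radical, so a nontrivial combination of the two lies in the kernel of `M`; reading this off row by
row puts two of `u, v, w` in the same class.

The number of classes is the rank of `M`, except that two classes give rank one; but all complete
multipartite graphs with at most two parts are switching equivalent.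
-/

section Hermitian

open scoped ComplexOrder

variable {𝕜 n : Type*} [RCLike 𝕜]

/-- A Hermitian matrix with at most one negative eigenvalue, encoded as a matrix that becomes
positive semidefinite on adding some positive semidefinite matrix of rank at most one. -/
def HasAtMostOneNegEigenvalue (M : Matrix n n 𝕜) : Prop :=
  ∃ y : n → 𝕜, (M + vecMulVec y (star y)).PosSemidef

lemma HasAtMostOneNegEigenvalue.isHermitian {M : Matrix n n 𝕜}
    (hM : HasAtMostOneNegEigenvalue M) : M.IsHermitian := by
  obtain ⟨y, hy⟩ := hM
  have hyy : (vecMulVec y (star y)).IsHermitian := by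
    simp [IsHermitian, conjTranspose_vecMulVec]
  simpa using hy.isHermitian.sub hyy

variable [Fintype n]

lemma mulVec_eq_zero_of_isotropic_of_orthogonal {M : Matrix n n 𝕜} {x y : n → 𝕜}
    (hM : (M + vecMulVec y (star y)).PosSemidef) (hyx : star y ⬝ᵥ x = 0)
    (hx : star x ⬝ᵥ M *ᵥ x = 0) : M *ᵥ x = 0 := by
  have hMx : (M + vecMulVec y (star y)) *ᵥ x = M *ᵥ x := by
    simp [add_mulVec, vecMulVec_mulVec, hyx]
  rw [← hMx] at hx ⊢
  exact (hM.dotProduct_mulVec_zero_iff x).1 hx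

lemma HasAtMostOneNegEigenvalue.exists_mulVec_smul_add_smul_eq_zero {M : Matrix n n 𝕜}
    (hM : HasAtMostOneNegEigenvalue M) {p q : n → 𝕜} (hp : star p ⬝ᵥ M *ᵥ p = 0)
    (hq : star q ⬝ᵥ M *ᵥ q = 0) (hpq : star p ⬝ᵥ M *ᵥ q = 0) :
    ∃ a b : 𝕜, (a ≠ 0 ∨ b ≠ 0) ∧ M *ᵥ (a • p + b • q) = 0 := by
  have hqp : star q ⬝ᵥ M *ᵥ p = 0 := by
    rw [star_dotProduct, star_mulVec, hM.isHermitian.eq, ← dotProduct_mulVec, hpq, star_zero]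
  obtain ⟨y, hy⟩ := hM
  obtain ⟨a, b, hab, horth⟩ :
      ∃ a b : 𝕜, (a ≠ 0 ∨ b ≠ 0) ∧ a * (star y ⬝ᵥ p) + b * (star y ⬝ᵥ q) = 0 := by
    by_cases h : star y ⬝ᵥ p = 0
    · exact ⟨1, 0, by simp [h]⟩
    · exact ⟨star y ⬝ᵥ q, -(star y ⬝ᵥ p), by simp [h], by ring⟩
  refine ⟨a, b, hab, mulVec_eq_zero_of_isotropic_of_orthogonal hy (by simpa using horth) ?_⟩
  simp [mulVec_add, mulVec_smul, hp, hq, hpq, hqp]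

variable [DecidableEq n]

lemma exists_conjStarAlgAut_eq_of_charpoly_eq {A B : Matrix n n 𝕜} (hA : A.IsHermitian)
    (hB : B.IsHermitian) (h : A.charpoly = B.charpoly) :
    ∃ U : unitaryGroup n 𝕜, A = Unitary.conjStarAlgAut 𝕜 _ U B := by
  refine ⟨hA.eigenvectorUnitary * hB.eigenvectorUnitary⁻¹, ?_⟩
  have hAB : hA.eigenvalues = hB.eigenvalues := (hA.eigenvalues_eq_eigenvalues_iff hB).2 h
  rw [Unitary.conjStarAlgAut_mul_apply, ← Unitary.star_eq_inv,
    hB.conjStarAlgAut_star_eigenvectorUnitary, ← hAB, ← hA.spectral_theorem]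

lemma HasAtMostOneNegEigenvalue.conjStarAlgAut {M : Matrix n n 𝕜}
    (hM : HasAtMostOneNegEigenvalue M) (U : unitaryGroup n 𝕜) :
    HasAtMostOneNegEigenvalue (Unitary.conjStarAlgAut 𝕜 _ U M) := by
  obtain ⟨y, hy⟩ := hM
  refine ⟨U *ᵥ y, ?_⟩
  convert hy.mul_mul_conjTranspose_same (U : Matrix n n 𝕜)
  rw [Unitary.conjStarAlgAut_apply, Matrix.mul_add, Matrix.add_mul, mul_vecMulVec, vecMulVec_mul,
    star_mulVec]
  rfl

end Hermitian

section Matrix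

variable {R m n m₀ n₀ : Type*} [Fintype n]

lemma rank_submatrix_of_surjective [CommSemiring R] [StrongRankCondition R] [Fintype n₀]
    (A : Matrix m n R) {r : m₀ → m} {c : n₀ → n} (hr : r.Surjective)
    (hc : c.Surjective) : (A.submatrix r c).rank = A.rank := by
  obtain ⟨r', hr'⟩ := hr.hasRightInverse
  obtain ⟨c', hc'⟩ := hc.hasRightInverse
  refine (rank_submatrix_le _ _ _).antisymm ?_
  calc A.rank = ((A.submatrix r c).submatrix r' c').rank := by
        rw [submatrix_submatrix, hr'.comp_eq_id, hc'.comp_eq_id, submatrix_id_id]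
    _ ≤ (A.submatrix r c).rank := rank_submatrix_le _ _ _

variable [DecidableEq n]

lemma rank_conjStarAlgAut [CommRing R] [StarRing R]
    (U : unitaryGroup n R) (M : Matrix n n R) :
    (Unitary.conjStarAlgAut R _ U M).rank = M.rank := by
  have hU : IsUnit (U : Matrix n n R).det := UnitaryGroup.det_isUnit U
  have hU' : IsUnit (star (U : Matrix n n R)).det := UnitaryGroup.det_isUnit (star U)
  rw [Unitary.conjStarAlgAut_apply, rank_mul_eq_left_of_isUnit_det _ _ hU',
    rank_mul_eq_right_of_isUnit_det _ _ hU]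

lemma nonempty_equiv_of_charpoly_eq [CommRing R] [Nontrivial R] [Fintype m] [DecidableEq m]
    {A : Matrix m m R} {B : Matrix n n R} (h : A.charpoly = B.charpoly) : Nonempty (m ≃ n) := by
  have hdeg := congrArg natDegree h
  rw [charpoly_natDegree_eq_dim, charpoly_natDegree_eq_dim] at hdeg
  exact ⟨Fintype.equivOfCardEq hdeg⟩

lemma diagonal_mul_self_eq_one [Ring R] {d : n → R} (hd : ∀ i, d i = 1 ∨ d i = -1) :
    diagonal d * diagonal d = 1 := by
  have hsq (i : n) : d i * d i = 1 := by rcases hd i with h | h <;> simp [h]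
  simp [diagonal_mul_diagonal, hsq]

end Matrix

section SignMatrix

variable {V W : Type*}

open scoped Classical in
/-- The matrix `S(G) + I`, with entry `-1` at adjacent pairs of vertices and `1` elsewhere,
including the diagonal. -/
noncomputable def signMatrix (G : SimpleGraph V) : Matrix V V ℝ :=
  Matrix.of fun u v => if G.Adj u v then -1 else 1

lemma signMatrix_apply (G : SimpleGraph V) [DecidableRel G.Adj] (u v : V) :
    signMatrix G u v = if G.Adj u v then -1 else 1 := by
  simp [signMatrix]

lemma seidelMatrix_eq_signMatrix_sub_one [Fintype V] [DecidableEq V] (G : SimpleGraph V) :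
    seidelMatrix G = signMatrix G - 1 := by
  classical
  ext u v
  by_cases h : G.Adj u v <;> simp [seidelMatrix, signMatrix_apply, two_mul, h]
  ring

@[simp]
lemma signMatrix_self (G : SimpleGraph V) (v : V) : signMatrix G v v = 1 := by
  simp [signMatrix]

lemma signMatrix_comm (G : SimpleGraph V) (u v : V) : signMatrix G u v = signMatrix G v u := by
  classical
  simp [signMatrix_apply, G.adj_comm u v]

lemma signMatrix_eq_one_or_eq_neg_one (G : SimpleGraph V) (u v : V) :
    signMatrix G u v = 1 ∨ signMatrix G u v = -1 := by
  classical
  rw [signMatrix_apply]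
  split_ifs <;> simp

@[simp]
lemma signMatrix_mul_self (G : SimpleGraph V) (u v : V) :
    signMatrix G u v * signMatrix G u v = 1 :=
  mul_self_eq_one_iff.2 (signMatrix_eq_one_or_eq_neg_one G u v)

lemma isHermitian_signMatrix (G : SimpleGraph V) : (signMatrix G).IsHermitian :=
  Matrix.IsHermitian.ext fun u v => by simp [signMatrix_comm G u v]

lemma signMatrix_comap (f : V → W) (G : SimpleGraph W) :
    signMatrix (G.comap f) = (signMatrix G).submatrix f f := rfl

lemma isHermitian_seidelMatrix [Fintype V] [DecidableEq V] (G : SimpleGraph V) :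
    (seidelMatrix G).IsHermitian := by
  rw [seidelMatrix_eq_signMatrix_sub_one]
  exact (isHermitian_signMatrix G).sub isHermitian_one

lemma exists_signMatrix_eq_conjStarAlgAut [Fintype V] [DecidableEq V] {G H : SimpleGraph V}
    (h : (seidelMatrix G).charpoly = (seidelMatrix H).charpoly) :
    ∃ U : unitaryGroup V ℝ, signMatrix G = Unitary.conjStarAlgAut ℝ _ U (signMatrix H) := by
  obtain ⟨U, hU⟩ := exists_conjStarAlgAut_eq_of_charpoly_eq (isHermitian_seidelMatrix G)
    (isHermitian_seidelMatrix H) h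
  refine ⟨U, ?_⟩
  simpa only [seidelMatrix_eq_signMatrix_sub_one, map_sub, map_one, sub_left_inj] using hU

lemma charpoly_seidelMatrix_comap_equiv [Fintype V] [DecidableEq V] [Fintype W] [DecidableEq W]
    (e : V ≃ W) (G : SimpleGraph W) :
    (seidelMatrix (G.comap e)).charpoly = (seidelMatrix G).charpoly := by
  rw [← charpoly_reindex e.symm (seidelMatrix G)]
  simp [seidelMatrix_eq_signMatrix_sub_one, signMatrix_comap, Matrix.submatrix_sub]

end SignMatrix

section Switching

variable {V : Type*}

/-- The sign of a triple of vertices, `-1` exactly when they span an odd number of edges.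
The triples of sign `-1` form the two-graph of `G`. -/
noncomputable def tripleSign (G : SimpleGraph V) (u v w : V) : ℝ :=
  signMatrix G u v * signMatrix G v w * signMatrix G w u

lemma tripleSign_rotate (G : SimpleGraph V) (u v w : V) :
    tripleSign G u v w = tripleSign G v w u := by
  unfold tripleSign
  ring

lemma tripleSign_swap (G : SimpleGraph V) (u v w : V) :
    tripleSign G u v w = tripleSign G v u w := by
  unfold tripleSign
  rw [signMatrix_comm G u v, signMatrix_comm G v w, signMatrix_comm G w u]
  ring

@[simp]
lemma tripleSign_self_left (G : SimpleGraph V) (u v : V) : tripleSign G u u v = 1 := by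
  simp [tripleSign, signMatrix_comm G v u]

@[simp]
lemma tripleSign_self_right (G : SimpleGraph V) (u v : V) : tripleSign G u v v = 1 := by
  rw [tripleSign_rotate, tripleSign_self_left]

@[simp]
lemma tripleSign_self_left_right (G : SimpleGraph V) (u v : V) : tripleSign G u v u = 1 := by
  rw [tripleSign_rotate, tripleSign_self_right]

lemma tripleSign_eq_one_or_eq_neg_one (G : SimpleGraph V) (u v w : V) :
    tripleSign G u v w = 1 ∨ tripleSign G u v w = -1 := by
  rw [← mul_self_eq_one_iff, tripleSign]
  calc _ = (signMatrix G u v * signMatrix G u v) * (signMatrix G v w * signMatrix G v w) *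
        (signMatrix G w u * signMatrix G w u) := by ring
    _ = 1 := by simp

lemma tripleSign_cocycle (G : SimpleGraph V) (u v w t : V) :
    tripleSign G u v w * tripleSign G u v t * tripleSign G u w t * tripleSign G v w t = 1 := by
  unfold tripleSign
  rw [signMatrix_comm G w u, signMatrix_comm G t u, signMatrix_comm G t v]
  calc _ = (signMatrix G u v * signMatrix G u v) * (signMatrix G v w * signMatrix G v w) *
        (signMatrix G u w * signMatrix G u w) * (signMatrix G u t * signMatrix G u t) *
        (signMatrix G v t * signMatrix G v t) * (signMatrix G w t * signMatrix G w t) := by ring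
    _ = 1 := by simp

lemma signMatrix_eq_tripleSign_mul (G : SimpleGraph V) (o u v : V) :
    signMatrix G u v = tripleSign G o u v * signMatrix G o u * signMatrix G o v := by
  rw [tripleSign, signMatrix_comm G v o]
  calc _ = signMatrix G u v * 1 * 1 := by ring
    _ = signMatrix G u v * (signMatrix G o u * signMatrix G o u) *
          (signMatrix G o v * signMatrix G o v) := by simp
    _ = _ := by ring

variable [Fintype V] [DecidableEq V]

lemma switchingEquiv_iff_signMatrix {G H : SimpleGraph V} :
    SwitchingEquiv G H ↔ ∃ ε : V → ℝ, (∀ v, ε v = 1 ∨ ε v = -1) ∧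
      ∀ u v, signMatrix H u v = ε u * signMatrix G u v * ε v := by
  refine exists_congr fun ε => and_congr_right fun hε => ?_
  rw [seidelMatrix_eq_signMatrix_sub_one, seidelMatrix_eq_signMatrix_sub_one, Matrix.mul_sub,
    Matrix.sub_mul, Matrix.mul_one, diagonal_mul_self_eq_one hε, sub_left_inj, ← Matrix.ext_iff]
  simp

theorem switchingEquiv_iff_tripleSign {G H : SimpleGraph V} :
    SwitchingEquiv G H ↔ ∀ u v w, tripleSign G u v w = tripleSign H u v w := by
  rw [switchingEquiv_iff_signMatrix]
  constructor
  · rintro ⟨ε, hε, hGH⟩ u v w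
    have hsq : ∀ v, ε v * ε v = 1 := fun v => mul_self_eq_one_iff.2 (hε v)
    simp only [tripleSign, hGH]
    calc _ = signMatrix G u v * signMatrix G v w * signMatrix G w u * 1 * 1 * 1 := by ring
      _ = signMatrix G u v * signMatrix G v w * signMatrix G w u * (ε u * ε u) * (ε v * ε v) *
          (ε w * ε w) := by simp only [hsq]
      _ = _ := by ring
  · intro h
    rcases isEmpty_or_nonempty V with _ | ⟨⟨o⟩⟩
    · exact ⟨1, isEmptyElim, isEmptyElim⟩
    refine ⟨fun v => signMatrix G o v * signMatrix H o v, fun v => ?_, fun u v => ?_⟩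
    · rcases signMatrix_eq_one_or_eq_neg_one G o v with hG | hG <;>
        simp [hG, signMatrix_eq_one_or_eq_neg_one, neg_eq_iff_eq_neg, or_comm]
    · rw [signMatrix_eq_tripleSign_mul G o u v, h, signMatrix_eq_tripleSign_mul H o u v]
      linear_combination -tripleSign H o u v * signMatrix H o u * signMatrix H o v *
        (signMatrix_mul_self G o u + signMatrix G o u ^ 2 * signMatrix_mul_self G o v)

lemma SwitchingEquiv.trans {G H K : SimpleGraph V} (hGH : SwitchingEquiv G H)
    (hHK : SwitchingEquiv H K) : SwitchingEquiv G K := by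
  rw [switchingEquiv_iff_tripleSign] at *
  exact fun u v w => (hGH u v w).trans (hHK u v w)

lemma SwitchingEquiv.charpoly_eq {G H : SimpleGraph V} (h : SwitchingEquiv G H) :
    (seidelMatrix G).charpoly = (seidelMatrix H).charpoly := by
  obtain ⟨ε, hε, hH⟩ := h
  rw [hH, charpoly_mul_comm, ← Matrix.mul_assoc, diagonal_mul_self_eq_one hε, Matrix.one_mul]

lemma SwitchingEquiv.rank_signMatrix_eq {G H : SimpleGraph V} (h : SwitchingEquiv G H) :
    (signMatrix G).rank = (signMatrix H).rank := by
  obtain ⟨U, hU⟩ := exists_signMatrix_eq_conjStarAlgAut h.charpoly_eq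
  rw [hU, rank_conjStarAlgAut]

end Switching

section SwitchingTwin

variable {V : Type*}

/-- Two vertices are switching twins if every triple through them has sign `1`. Some switching
makes them false twins, that is, nonadjacent with the same neighbours. -/
def SwitchingTwin (G : SimpleGraph V) (u v : V) : Prop :=
  ∀ t, tripleSign G u v t = 1

lemma SwitchingTwin.symm {G : SimpleGraph V} {u v : V} (h : SwitchingTwin G u v) :
    SwitchingTwin G v u :=
  fun t => by rw [tripleSign_swap, h t]

lemma SwitchingTwin.trans {G : SimpleGraph V} {u v w : V} (huv : SwitchingTwin G u v)
    (hvw : SwitchingTwin G v w) : SwitchingTwin G u w :=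
  fun t => by simpa [huv w, huv t, hvw t] using tripleSign_cocycle G u v w t

/-- The equivalence relation of being switching twins. Its classes are the parts when `G` is
switching equivalent to a complete multipartite graph with at least three parts. -/
def switchingTwinSetoid (G : SimpleGraph V) : Setoid V where
  r := SwitchingTwin G
  iseqv := ⟨tripleSign_self_left G, SwitchingTwin.symm, SwitchingTwin.trans⟩

section PairVector

variable [DecidableEq V]

/-- The vector `e_u - M u v • e_v`, where `M` is the sign matrix; it is isotropic for `M`. -/
noncomputable def pairVector (G : SimpleGraph V) (u v : V) : V → ℝ :=
  Pi.single u 1 - signMatrix G u v • Pi.single v 1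

variable [Fintype V]

lemma signMatrix_mulVec_pairVector (G : SimpleGraph V) (u v t : V) :
    (signMatrix G *ᵥ pairVector G u v) t = signMatrix G t u * (1 - tripleSign G u v t) := by
  have hentry : (signMatrix G *ᵥ pairVector G u v) t =
      signMatrix G t u - signMatrix G u v * signMatrix G t v := by
    simp [pairVector, mulVec_sub, mulVec_smul]
  rw [hentry, tripleSign, signMatrix_comm G v t]
  linear_combination signMatrix G u v * signMatrix G t v * signMatrix_mul_self G t u

lemma pairVector_dotProduct_mulVec_pairVector (G : SimpleGraph V) (u v w : V) :
    pairVector G u v ⬝ᵥ signMatrix G *ᵥ pairVector G u w = tripleSign G u v w - 1 := by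
  have hsplit (z : V → ℝ) : pairVector G u v ⬝ᵥ z = z u - signMatrix G u v * z v := by
    simp [pairVector, sub_dotProduct]
  rw [hsplit, signMatrix_mulVec_pairVector, signMatrix_mulVec_pairVector,
    tripleSign_self_left_right, tripleSign_rotate G u w v, tripleSign_rotate G w v u,
    tripleSign_swap G v u w, signMatrix_comm G v u]
  linear_combination (tripleSign G u v w - 1) * signMatrix_mul_self G u v

end PairVector

lemma switchingTwin_of_tripleSign_eq_one [Finite V] {G : SimpleGraph V}
    (hG : HasAtMostOneNegEigenvalue (signMatrix G)) {u v w : V} (h : tripleSign G u v w = 1) :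
    SwitchingTwin G u v ∨ SwitchingTwin G v w ∨ SwitchingTwin G u w := by
  classical
  cases nonempty_fintype V
  obtain ⟨a, b, hab, hker⟩ := hG.exists_mulVec_smul_add_smul_eq_zero
    (p := pairVector G u v) (q := pairVector G u w)
    (by simp [pairVector_dotProduct_mulVec_pairVector])
    (by simp [pairVector_dotProduct_mulVec_pairVector])
    (by simp [pairVector_dotProduct_mulVec_pairVector, h])
  have hrow (t : V) : a * (1 - tripleSign G u v t) + b * (1 - tripleSign G u w t) = 0 := by
    have ht := congrFun hker t
    simp only [mulVec_add, mulVec_smul, Pi.add_apply, Pi.smul_apply, signMatrix_mulVec_pairVector,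
      smul_eq_mul, Pi.zero_apply] at ht
    linear_combination signMatrix G t u * ht - (a * (1 - tripleSign G u v t) +
      b * (1 - tripleSign G u w t)) * signMatrix_mul_self G t u
  by_cases ha : a = 0
  · have hb : b ≠ 0 := hab.resolve_left (not_not.2 ha)
    exact .inr <| .inr fun t => by simpa [ha, hb, sub_eq_zero, eq_comm (a := (1 : ℝ))] using hrow t
  by_cases hb : b = 0
  · exact .inl fun t => by simpa [hb, ha, sub_eq_zero, eq_comm (a := (1 : ℝ))] using hrow t
  have heq (t : V) : tripleSign G u v t = tripleSign G u w t := by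
    have ht := hrow t
    rcases tripleSign_eq_one_or_eq_neg_one G u v t with hv | hv <;>
    rcases tripleSign_eq_one_or_eq_neg_one G u w t with hw | hw <;>
    simp_all
  have hsq (t : V) : tripleSign G u w t * tripleSign G u w t = 1 :=
    mul_self_eq_one_iff.2 (tripleSign_eq_one_or_eq_neg_one G u w t)
  exact .inr <| .inl fun t => by simpa [h, heq, hsq] using tripleSign_cocycle G u v w t

end SwitchingTwin

section CompleteMultipartite

variable {V C D : Type*}

-- The complete multipartite graph with the fibres of `f` as parts is `(⊤ : SimpleGraph C).comap f`.
lemma tripleSign_comap_top_eq_one_iff (f : V → C) (u v w : V) :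
    tripleSign ((⊤ : SimpleGraph C).comap f) u v w = 1 ↔ f u = f v ∨ f v = f w ∨ f u = f w := by
  classical
  by_cases huv : f u = f v <;> by_cases hvw : f v = f w <;> by_cases huw : f u = f w <;>
    simp_all [tripleSign, signMatrix_apply, eq_comm]
  norm_num

lemma tripleSign_comap_top_of_card_le_two [Fintype C] (hC : Fintype.card C ≤ 2) (f : V → C)
    (u v w : V) : tripleSign ((⊤ : SimpleGraph C).comap f) u v w = 1 := by
  rw [tripleSign_comap_top_eq_one_iff]
  by_contra! h
  exact hC.not_gt (Fintype.two_lt_card_iff.2 ⟨f u, f v, f w, h.1, h.2.2, h.2.1⟩)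

lemma switchingEquiv_comap_top_of_card_le_two [Fintype V] [DecidableEq V] [Fintype C] [Fintype D]
    (hC : Fintype.card C ≤ 2) (hD : Fintype.card D ≤ 2) (f : V → C) (g : V → D) :
    SwitchingEquiv ((⊤ : SimpleGraph C).comap f) ((⊤ : SimpleGraph D).comap g) :=
  switchingEquiv_iff_tripleSign.2 fun u v w => by
    rw [tripleSign_comap_top_of_card_le_two hC, tripleSign_comap_top_of_card_le_two hD]

theorem switchingEquiv_comap_top_switchingTwinSetoid [Fintype V] [DecidableEq V]
    {G : SimpleGraph V} (hG : HasAtMostOneNegEigenvalue (signMatrix G)) :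
    SwitchingEquiv G
      ((⊤ : SimpleGraph (Quotient (switchingTwinSetoid G))).comap (Quotient.mk _)) := by
  have hmk (u v : V) : Quotient.mk (switchingTwinSetoid G) u = Quotient.mk _ v ↔
      SwitchingTwin G u v := Quotient.eq
  refine switchingEquiv_iff_tripleSign.2 fun u v w => ?_
  have hiff : tripleSign G u v w = 1 ↔ tripleSign (SimpleGraph.comap
      (Quotient.mk (switchingTwinSetoid G)) ⊤) u v w = 1 := by
    rw [tripleSign_comap_top_eq_one_iff, hmk, hmk, hmk]
    refine ⟨switchingTwin_of_tripleSign_eq_one hG, ?_⟩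
    rintro (huv | hvw | huw)
    · exact huv w
    · rw [tripleSign_rotate, hvw u]
    · rw [tripleSign_rotate, tripleSign_rotate, huw.symm v]
  by_cases h : tripleSign G u v w = 1
  · rw [h, hiff.1 h]
  · rw [(tripleSign_eq_one_or_eq_neg_one G u v w).resolve_left h,
      (tripleSign_eq_one_or_eq_neg_one _ u v w).resolve_left (mt hiff.2 h)]

lemma signMatrix_comap_top_add_vecMulVec_one [DecidableEq C] (f : V → C) :
    signMatrix ((⊤ : SimpleGraph C).comap f) + vecMulVec 1 1 =
      ((2 : ℝ) • (1 : Matrix C C ℝ)).submatrix f f := by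
  ext u v
  by_cases h : f u = f v <;> simp [signMatrix_apply, h]
  norm_num

open scoped ComplexOrder in
lemma hasAtMostOneNegEigenvalue_signMatrix_comap_top (f : V → C) :
    HasAtMostOneNegEigenvalue (signMatrix ((⊤ : SimpleGraph C).comap f)) := by
  classical
  refine ⟨1, ?_⟩
  rw [star_one, signMatrix_comap_top_add_vecMulVec_one]
  exact (PosSemidef.one.smul zero_le_two).submatrix f

lemma rank_signMatrix_top [Fintype C] (hC : Fintype.card C ≠ 2) :
    (signMatrix (⊤ : SimpleGraph C)).rank = Fintype.card C := by
  classical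
  refine rank_of_isUnit _ (mulVec_injective_iff_isUnit.1 ?_)
  refine (injective_iff_map_eq_zero (signMatrix (⊤ : SimpleGraph C)).mulVecLin).2 fun x hx => ?_
  have hcoord (c : C) : 2 * x c = ∑ d, x d := by
    have hc : ∑ d, (if c = d then 1 else -1) * x d = 0 := by
      simpa [mulVec, dotProduct, signMatrix_apply] using congrFun hx c
    have hsplit (d : C) : (if c = d then 1 else -1) * x d =
        (if c = d then 2 * x d else 0) - x d := by
      split_ifs <;> ring
    simpa [hsplit, Finset.sum_sub_distrib, sub_eq_zero] using hc
  have hsum : ∑ d, x d = 0 := by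
    have h : ((Fintype.card C : ℝ) - 2) * ∑ d, x d = 0 := by
      calc _ = ∑ _c : C, ∑ d, x d - ∑ c, 2 * x c := by simp [Finset.mul_sum, sub_mul]
        _ = 0 := by simp only [hcoord, sub_self]
    exact (mul_eq_zero.1 h).resolve_left (sub_ne_zero.2 (mod_cast hC))
  ext c
  simpa [hsum] using hcoord c

lemma rank_signMatrix_top_le_one [Fintype C] (hC : Fintype.card C ≤ 2) :
    (signMatrix (⊤ : SimpleGraph C)).rank ≤ 1 := by
  rcases isEmpty_or_nonempty C with _ | ⟨⟨o⟩⟩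
  · exact (rank_le_card_width _).trans (by simp)
  have hrankOne : signMatrix (⊤ : SimpleGraph C) =
      vecMulVec (signMatrix ⊤ o) (signMatrix ⊤ o) := by
    ext c d
    rw [signMatrix_eq_tripleSign_mul _ o, vecMulVec_apply,
      ← comap_id (G := (⊤ : SimpleGraph C)), tripleSign_comap_top_of_card_le_two hC, one_mul]
  rw [hrankOne]
  exact rank_vecMulVec_le _ _

lemma card_eq_or_card_le_two_of_rank_signMatrix_top_eq [Fintype C] [Fintype D]
    (h : (signMatrix (⊤ : SimpleGraph C)).rank = (signMatrix (⊤ : SimpleGraph D)).rank) :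
    Fintype.card C = Fintype.card D ∨ Fintype.card C ≤ 2 ∧ Fintype.card D ≤ 2 := by
  by_cases hC : Fintype.card C = 2 <;> by_cases hD : Fintype.card D = 2
  · exact .inl (hC.trans hD.symm)
  · have := rank_signMatrix_top_le_one hC.le
    have := rank_signMatrix_top hD
    omega
  · have := rank_signMatrix_top hC
    have := rank_signMatrix_top_le_one hD.le
    omega
  · exact .inl (by rw [← rank_signMatrix_top hC, h, rank_signMatrix_top hD])

end CompleteMultipartite

section Main

variable {V W C : Type*}

theorem switchingEquiv_multipartite_of_seidel_cospectral_general [Fintype V] [DecidableEq V]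
    [Fintype W] [DecidableEq W] {f : V → C} (hf : f.Surjective) {G : SimpleGraph W}
    (hcospec : (seidelMatrix G).charpoly =
      (seidelMatrix ((⊤ : SimpleGraph C).comap f)).charpoly) :
    ∃ g : W → C, g.Surjective ∧ SwitchingEquiv G ((⊤ : SimpleGraph C).comap g) := by
  classical
  have := Fintype.ofSurjective f hf
  obtain ⟨e⟩ := nonempty_equiv_of_charpoly_eq hcospec
  have hfe : (f ∘ e).Surjective := hf.comp e.surjective
  rw [← charpoly_seidelMatrix_comap_equiv e, comap_comap] at hcospec
  obtain ⟨U, hU⟩ := exists_signMatrix_eq_conjStarAlgAut hcospec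
  have hneg : HasAtMostOneNegEigenvalue (signMatrix G) :=
    hU ▸ (hasAtMostOneNegEigenvalue_signMatrix_comap_top (f ∘ e)).conjStarAlgAut U
  have hsw := switchingEquiv_comap_top_switchingTwinSetoid hneg
  have hmk : (Quotient.mk (switchingTwinSetoid G)).Surjective := Quotient.mk_surjective
  have hrank : (signMatrix (⊤ : SimpleGraph (Quotient (switchingTwinSetoid G)))).rank =
      (signMatrix (⊤ : SimpleGraph C)).rank := by
    rw [← rank_submatrix_of_surjective _ hmk hmk, ← signMatrix_comap, ← hsw.rank_signMatrix_eq, hU,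
      rank_conjStarAlgAut, signMatrix_comap, rank_submatrix_of_surjective _ hfe hfe]
  rcases card_eq_or_card_le_two_of_rank_signMatrix_top_eq hrank with hcard | ⟨hQ, hC⟩
  · let c := Fintype.equivOfCardEq hcard
    refine ⟨c ∘ Quotient.mk _, c.surjective.comp hmk, ?_⟩
    rwa [← comap_comap, comap_top c.injective]
  · exact ⟨f ∘ e, hfe, hsw.trans (switchingEquiv_comap_top_of_card_le_two hQ hC _ _)⟩

lemma exists_comap_top_iso_completeMultipartiteGraph [Finite V] {g : V → C} (hg : g.Surjective) :
    ∃ q : C → ℕ, (∀ c, 1 ≤ q c) ∧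
      Nonempty ((⊤ : SimpleGraph C).comap g ≃g completeMultipartiteGraph fun c => Fin (q c)) := by
  refine ⟨fun c => Nat.card {v // g v = c}, fun c => ?_, ⟨(Equiv.sigmaFiberEquiv g).symm.trans
    (Equiv.sigmaCongrRight fun c => Finite.equivFin {v // g v = c}), Iff.rfl⟩⟩
  obtain ⟨v, hv⟩ := hg c
  have : Nonempty {v // g v = c} := ⟨v, hv⟩
  exact Nat.card_pos

end Main

/-- **Theorem.** Any graph with the same Seidel spectrum as the complete
`k`-partite graph `K_{n_1,…,n_k}` is switching equivalent to a complete
`k`-partite graph. -/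
theorem switchingEquiv_multipartite_of_seidel_cospectral (k : ℕ) (n : Fin k → ℕ)
    (hn : ∀ i, 1 ≤ n i) (W : Type) [Fintype W] [DecidableEq W] (G : SimpleGraph W)
    (hcospec : (seidelMatrix G).charpoly =
      (seidelMatrix (completeMultipartiteGraph fun i => Fin (n i))).charpoly) :
    ∃ H : SimpleGraph W, SwitchingEquiv G H ∧
      ∃ q : Fin k → ℕ, (∀ i, 1 ≤ q i) ∧
        Nonempty (H ≃g completeMultipartiteGraph fun i => Fin (q i)) := by
  obtain ⟨g, hg, hGg⟩ := switchingEquiv_multipartite_of_seidel_cospectral_general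
    (fun i => ⟨⟨i, ⟨0, hn i⟩⟩, rfl⟩) hcospec
  exact ⟨_, hGg, exists_comap_top_iso_completeMultipartiteGraph hg⟩
end
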